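/- For all real numbers x and y, (1/(2π)²) · ∫_{ℝ²} exp(−iux − ivy) · ((u − i)² + (v − i)² + 3)^(−3/2) du dv = (1/(2√3·π)) · exp(x + y − √3·√(x² + y²)), where the complex power is taken with the principal branch. -/

import Mathlib

open MeasureTheory Complex

theorem schlo (a c : ℝ) (ha : 0 < a) (hc : 0 < c) :
    ∫ s in Set.Ioi (0:ℝ), Real.exp (-(a * s - c / s) ^ 2) = √Real.pi / (2 * a) := by
  have hd1 : ∀ s ∈ Set.Ioi (0:ℝ), HasDerivWithinAt (fun s => a * s - c / s) (a + c / s ^ 2) (Set.Ioi 0) s := by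
    intro s hs
    have hs0 : s ≠ 0 := ne_of_gt hs
    have h := ((hasDerivAt_id s).const_mul a).sub ((hasDerivAt_inv hs0).const_mul c)
    refine (h.congr_deriv ?_).hasDerivWithinAt.congr_of_mem ?_ hs
    · field_simp; ring
    · intro t _; simp [div_eq_mul_inv]
  have hi1 : Set.InjOn (fun s => a * s - c / s) (Set.Ioi (0:ℝ)) := by
    intro s hs t ht h
    have hs : 0 < s := hs
    have ht : 0 < t := ht
    simp only at h
    field_simp at h
    have h2 : (s - t) * (a * s * t + c) = 0 := by linear_combination h
    rcases mul_eq_zero.mp h2 with h3 | h3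
    · linarith
    · have : 0 < a * s * t + c := by positivity
      linarith
  have him1 : (fun s => a * s - c / s) '' (Set.Ioi (0:ℝ)) = Set.univ := by
    ext y
    simp only [Set.mem_image, Set.mem_univ, iff_true]
    have hq : √(y ^ 2 + 4 * a * c) ^ 2 = y ^ 2 + 4 * a * c := Real.sq_sqrt (by positivity)
    have hpos : 0 < y + √(y ^ 2 + 4 * a * c) := by
      have : |y| < √(y ^ 2 + 4 * a * c) := by
        rw [← Real.sqrt_sq_eq_abs]
        apply Real.sqrt_lt_sqrt (by positivity)
        have : 0 < a * c := by positivity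
        linarith
      have := neg_abs_le y
      linarith
    refine ⟨(y + √(y ^ 2 + 4 * a * c)) / (2 * a), by simp only [Set.mem_Ioi]; positivity, ?_⟩
    generalize √(y ^ 2 + 4 * a * c) = q at hq hpos
    have hne : y + q ≠ 0 := hpos.ne'
    have : c / ((y + q) / (2 * a)) = 2 * a * c / (y + q) := by field_simp
    simp only [this]
    rw [show a * ((y + q) / (2 * a)) = (y + q) / 2 by field_simp, sub_eq_iff_eq_add]
    field_simp
    linear_combination hq
  have hd2 : ∀ s ∈ Set.Ioi (0:ℝ), HasDerivWithinAt (fun s => c / (a * s)) (-(c / (a * s ^ 2))) (Set.Ioi 0) s := by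
    intro s hs
    have hs0 : s ≠ 0 := ne_of_gt hs
    have h := ((hasDerivAt_inv hs0).const_mul (c / a))
    refine (h.congr_deriv ?_).hasDerivWithinAt.congr_of_mem ?_ hs
    · field_simp
    · intro t _; simp [div_eq_mul_inv]; ring
  have hi2 : Set.InjOn (fun s => c / (a * s)) (Set.Ioi (0:ℝ)) := by
    intro s hs t ht h
    have hs : 0 < s := hs
    have ht : 0 < t := ht
    simp only at h
    field_simp at h
    linarith
  have him2 : (fun s => c / (a * s)) '' (Set.Ioi (0:ℝ)) = Set.Ioi 0 := by
    ext y
    simp only [Set.mem_image, Set.mem_Ioi]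
    constructor
    · rintro ⟨s, hs, rfl⟩; positivity
    · intro hy
      exact ⟨c / (a * y), by positivity, by field_simp⟩
  have e1 := integral_image_eq_integral_abs_deriv_smul measurableSet_Ioi hd1 hi1 (fun x => Real.exp (-x ^ 2))
  have e2 := integral_image_eq_integral_abs_deriv_smul measurableSet_Ioi hd2 hi2 (fun s => Real.exp (-(a * s - c / s) ^ 2))
  have i1 := (integrableOn_image_iff_integrableOn_abs_deriv_smul measurableSet_Ioi hd1 hi1 (fun x => Real.exp (-x ^ 2))).1 
    (by rw [him1]; simpa using integrable_exp_neg_mul_sq one_pos)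
  rw [him1] at e1
  rw [him2] at e2
  have e0 : ∫ x : ℝ, Real.exp (-x ^ 2) = √Real.pi := by simpa using integral_gaussian 1
  rw [setIntegral_univ, e0] at e1
  have i2 : IntegrableOn (fun s => Real.exp (-(a * s - c / s) ^ 2)) (Set.Ioi (0:ℝ)) := by
    refine Integrable.mono' (i1.const_mul (1 / a)) (by fun_prop) ?_
    filter_upwards [ae_restrict_mem measurableSet_Ioi] with s hs
    have hs : 0 < s := hs
    rw [Real.norm_of_nonneg (Real.exp_nonneg _), abs_of_pos (by positivity), smul_eq_mul, ← mul_assoc]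
    refine le_mul_of_one_le_left (Real.exp_nonneg _) ?_
    have : 1 / a * (a + c / s ^ 2) = 1 + c / (a * s ^ 2) := by field_simp
    rw [this]
    have : 0 < c / (a * s ^ 2) := by positivity
    linarith
  have e3 : ∫ s in Set.Ioi (0:ℝ), |-(c / (a * s ^ 2))| • Real.exp (-(a * (c / (a * s)) - c / (c / (a * s))) ^ 2)
      = ∫ s in Set.Ioi (0:ℝ), ((1 / a) * (|a + c / s ^ 2| • Real.exp (-(a * s - c / s) ^ 2)) - Real.exp (-(a * s - c / s) ^ 2)) := by
    refine setIntegral_congr_fun measurableSet_Ioi ?_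
    intro s hs
    have hs : 0 < s := hs
    have h1 : |a + c / s ^ 2| = a + c / s ^ 2 := abs_of_pos (by positivity)
    have h2 : |-(c / (a * s ^ 2))| = c / (a * s ^ 2) := by rw [abs_neg]; exact abs_of_pos (by positivity)
    have h3 : (a * (c / (a * s)) - c / (c / (a * s))) ^ 2 = (a * s - c / s) ^ 2 := by
      field_simp; ring
    simp only [h1, h2, h3, smul_eq_mul]
    field_simp
    ring
  rw [e3, integral_sub (i1.const_mul _) i2, integral_const_mul, ← e1] at e2
  field_simp at e2 ⊢
  linarith

theorem bessel_half (r : ℝ) (hr : 0 ≤ r) :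
    ∫ t in Set.Ioi (0:ℝ), t ^ (-(1/2) : ℝ) * Real.exp (-3 * t - r ^ 2 / (4 * t)) =
      √Real.pi / √3 * Real.exp (-√3 * r) := by
  rw [← integral_comp_rpow_Ioi_of_pos (p := 2) (by norm_num)]
  have h3 : √3 ^ 2 = (3:ℝ) := Real.sq_sqrt (by norm_num)
  have : ∀ s ∈ Set.Ioi (0:ℝ), ((2 * s ^ ((2:ℝ) - 1)) • ((s ^ (2:ℝ)) ^ (-(1/2) : ℝ) * Real.exp (-3 * s ^ (2:ℝ) - r ^ 2 / (4 * s ^ (2:ℝ))))) = (2 * Real.exp (-√3 * r)) * Real.exp (-(√3 * s - (r / 2) / s) ^ 2) := by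
    intro s hs
    have hs : 0 < s := hs
    have h1 : (s ^ (2:ℝ)) ^ (-(1/2) : ℝ) = s⁻¹ := by
      rw [← Real.rpow_mul hs.le, ← Real.rpow_neg_one]; norm_num
    rw [h1, show (2:ℝ) - 1 = 1 by norm_num, Real.rpow_one, Real.rpow_two, mul_assoc 2 (Real.exp _), ← Real.exp_add, smul_eq_mul]
    have h2 : -3 * s ^ 2 - r ^ 2 / (4 * s ^ 2) = -√3 * r + -(√3 * s - r / 2 / s) ^ 2 := by
      field_simp; linear_combination (16 * s ^ 4) * h3
    rw [h2]; field_simp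
  rw [setIntegral_congr_fun measurableSet_Ioi this, integral_const_mul]
  rcases hr.eq_or_lt with h | h
  · subst h
    have : ∀ s : ℝ, Real.exp (-(√3 * s - 0 / 2 / s) ^ 2) = Real.exp (-3 * s ^ 2) := by
      intro s; congr 1; simp; rw [mul_pow, h3]
    simp only [this]
    rw [integral_gaussian_Ioi, Real.sqrt_div Real.pi_pos.le]; ring
  · rw [schlo _ _ (by positivity) (by positivity)]; field_simp

theorem gauss1 (x t : ℝ) (ht : 0 < t) :
    ∫ u : ℝ, cexp (-(I * u * x) - t * ((u:ℂ) - I) ^ 2) =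
      ((√(Real.pi / t) * Real.exp (x - x ^ 2 / (4 * t)) : ℝ) : ℂ) := by
  have h := integral_cexp_quadratic (b := -(t:ℂ)) (by simpa using ht) (-(I * x) + 2 * I * t) t
  have htc : (t:ℂ) ≠ 0 := by exact_mod_cast ht.ne'
  have e : ∀ u : ℝ, cexp (-(I * u * x) - t * ((u:ℂ) - I) ^ 2) =
      cexp (-(t:ℂ) * (u:ℂ) ^ 2 + (-(I * x) + 2 * I * t) * u + t) := by
    intro u
    congr 1
    linear_combination (-(t:ℂ)) * I_sq
  simp only [e]
  rw [h]
  push_cast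
  congr 1
  · rw [neg_neg, Real.sqrt_eq_rpow, ofReal_cpow (by positivity)]
    push_cast; rfl
  · congr 1
    field_simp
    linear_combination ((x:ℂ) ^ 2 - 4 * x * t + 4 * t ^ 2) * I_sq

theorem gauss1_int (x t : ℝ) (ht : 0 < t) :
    Integrable (fun u : ℝ => cexp (-(I * u * x) - t * ((u:ℂ) - I) ^ 2)) := by
  have h := integrable_cexp_quadratic (b := (t:ℂ)) (by simpa using ht) (-(I * x) + 2 * I * t) t
  refine h.congr (Filter.Eventually.of_forall fun u => ?_)
  simp only
  congr 1
  linear_combination ((t:ℂ)) * I_sq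

/-- The integrand after subordination. -/
noncomputable def FF (x y : ℝ) (p : ℝ × ℝ) (t : ℝ) : ℂ :=
  cexp (-(I * p.1 * x) - I * p.2 * y) *
    ((t:ℂ) ^ ((3/2 : ℂ) - 1) * cexp (-((((p.1:ℂ) - I) ^ 2 + ((p.2:ℂ) - I) ^ 2 + 3) * t)))

theorem FF_split (x y : ℝ) (p : ℝ × ℝ) (t : ℝ) :
    FF x y p t = ((t:ℂ) ^ ((3/2 : ℂ) - 1) * cexp (-3 * t)) *
      (cexp (-(I * p.1 * x) - t * ((p.1:ℂ) - I) ^ 2) *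
        cexp (-(I * p.2 * y) - t * ((p.2:ℂ) - I) ^ 2)) := by
  unfold FF
  rw [mul_left_comm, ← Complex.exp_add, mul_assoc ((t:ℂ) ^ ((3/2 : ℂ) - 1)), ← Complex.exp_add, ← Complex.exp_add]
  congr 2
  ring

theorem t_pow (t : ℝ) (ht : 0 < t) : (t:ℂ) ^ ((3/2 : ℂ) - 1) = ((√t : ℝ) : ℂ) := by
  rw [Real.sqrt_eq_rpow, ofReal_cpow ht.le]
  push_cast
  norm_num

theorem FF_inner (x y t : ℝ) (ht : 0 < t) :
    ∫ p : ℝ × ℝ, FF x y p t =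
     (((Real.pi * Real.exp (x + y)) * (t ^ (-(1/2) : ℝ) * Real.exp (-3 * t - √(x ^ 2 + y ^ 2) ^ 2 / (4 * t))) : ℝ) : ℂ) := by
  simp only [FF_split]
  rw [integral_const_mul, Measure.volume_eq_prod, integral_prod_mul (fun u : ℝ => cexp (-(I * u * x) - t * ((u:ℂ) - I) ^ 2)) (fun u : ℝ => cexp (-(I * u * y) - t * ((u:ℂ) - I) ^ 2)), gauss1 x t ht, gauss1 y t ht, t_pow t ht]
  have : cexp (-3 * t) = ((Real.exp (-3 * t) : ℝ) : ℂ) := by push_cast; rfl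
  rw [this, ← ofReal_mul, ← ofReal_mul, ← ofReal_mul]
  congr 1
  rw [Real.sq_sqrt (by positivity), Real.rpow_neg ht.le, ← Real.sqrt_eq_rpow]
  have h1 : Real.exp (x + y) * Real.exp (-3 * t - (x ^ 2 + y ^ 2) / (4 * t)) =
     Real.exp (-3 * t) * (Real.exp (x - x ^ 2 / (4 * t)) * Real.exp (y - y ^ 2 / (4 * t))) := by
    rw [← Real.exp_add, ← Real.exp_add, ← Real.exp_add]; congr 1; ring
  have h2 : √(Real.pi / t) * √(Real.pi / t) = Real.pi / t := Real.mul_self_sqrt (by positivity)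
  have h3 : √t * (Real.pi / t) = Real.pi * (√t)⁻¹ := by
    have := Real.mul_self_sqrt ht.le
    have h4 : √t ≠ 0 := by positivity
    field_simp
    linear_combination this
  linear_combination (√t * Real.exp (-3 * t) * (Real.exp (x - x ^ 2 / (4 * t)) * Real.exp (y - y ^ 2 / (4 * t)))) * h2 +
    (Real.exp (-3 * t) * (Real.exp (x - x ^ 2 / (4 * t)) * Real.exp (y - y ^ 2 / (4 * t)))) * h3 - (Real.pi * (√t)⁻¹) * h1

theorem FF_norm (x y t : ℝ) (ht : 0 < t) (p : ℝ × ℝ) :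
    ‖FF x y p t‖ = (√t * Real.exp (-t)) * (Real.exp (-t * p.1 ^ 2) * Real.exp (-t * p.2 ^ 2)) := by
  unfold FF
  rw [t_pow t ht, norm_mul, norm_mul, Complex.norm_exp, Complex.norm_exp, Complex.norm_real,
    Real.norm_of_nonneg (Real.sqrt_nonneg _), mul_left_comm, ← Real.exp_add, mul_assoc (√t), ← Real.exp_add, ← Real.exp_add]
  congr 2
  simp [pow_two]
  ring

theorem FF_integrable (x y : ℝ) :
    Integrable (Function.uncurry (FF x y)) ((volume : Measure (ℝ × ℝ)).prod (volume.restrict (Set.Ioi 0))) := by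
  rw [integrable_prod_iff']
  · constructor
    · filter_upwards [ae_restrict_mem measurableSet_Ioi] with t ht
      simp only [Function.uncurry, FF_split]
      rw [Measure.volume_eq_prod]
      exact ((gauss1_int x t ht).mul_prod (gauss1_int y t ht)).const_mul _
    · have h := (Real.GammaIntegral_convergent (s := 1/2) (by norm_num)).const_mul Real.pi
      refine h.congr ?_
      filter_upwards [ae_restrict_mem measurableSet_Ioi] with t ht
      have ht : 0 < t := ht
      simp only [Function.uncurry, FF_norm x y t ht]
      rw [integral_const_mul, Measure.volume_eq_prod, integral_prod_mul (fun u : ℝ => Real.exp (-t * u ^ 2)) (fun u : ℝ => Real.exp (-t * u ^ 2)), integral_gaussian, Real.mul_self_sqrt (by positivity)]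
      rw [show (1/2 - 1 : ℝ) = -(1/2) by norm_num, Real.rpow_neg ht.le, ← Real.sqrt_eq_rpow]
      have := Real.mul_self_sqrt ht.le
      have h4 : √t ≠ 0 := by positivity
      field_simp
      linear_combination -this
  · apply Measurable.aestronglyMeasurable
    unfold FF Function.uncurry
    fun_prop

theorem gamma_three_half (z : ℂ) (hz : 0 < z.re) :
    ∫ t in Set.Ioi (0:ℝ), (t:ℂ) ^ ((3/2 : ℂ) - 1) * cexp (-(z * t)) =
      z ^ (-(3/2) : ℂ) * ((√Real.pi / 2 : ℝ) : ℂ) := by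
  have hz0 : z ≠ 0 := by rintro rfl; simp at hz
  rw [← integral_comp_rpow_Ioi_of_pos (p := 2) (by norm_num)]
  have hG := integral_gaussian_complex_Ioi hz
  have iG : IntegrableOn (fun s : ℝ => cexp (-z * (s:ℂ) ^ 2)) (Set.Ioi 0) :=
    (integrable_cexp_neg_mul_sq hz).integrableOn
  have i2 : IntegrableOn (fun s : ℝ => (s:ℂ) ^ 2 * cexp (-z * (s:ℂ) ^ 2)) (Set.Ioi 0) := by
    refine Integrable.mono' (integrableOn_rpow_mul_exp_neg_mul_sq hz (s := 2) (by norm_num))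
      (by fun_prop) (Filter.Eventually.of_forall fun s => ?_)
    rw [norm_mul, norm_cexp_neg_mul_sq, norm_pow, Complex.norm_real, Real.rpow_two, Real.norm_eq_abs, sq_abs]
  have hd : ∀ s ∈ Set.Ici (0:ℝ), HasDerivAt (fun s : ℝ => (s:ℂ) * cexp (-z * (s:ℂ) ^ 2))
      (cexp (-z * (s:ℂ) ^ 2) - 2 * z * ((s:ℂ) ^ 2 * cexp (-z * (s:ℂ) ^ 2))) s := by
    intro s _
    have h1 : HasDerivAt (fun w : ℂ => w * cexp (-z * w ^ 2))
      (cexp (-z * (s:ℂ) ^ 2) - 2 * z * ((s:ℂ) ^ 2 * cexp (-z * (s:ℂ) ^ 2))) (s:ℂ) := by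
      have := (hasDerivAt_id (s:ℂ)).mul ((((hasDerivAt_id (s:ℂ)).pow 2).const_mul (-z)).cexp)
      refine this.congr_deriv ?_
      simp
      ring
    exact h1.comp_ofReal
  have hlim : Filter.Tendsto (fun s : ℝ => (s:ℂ) * cexp (-z * (s:ℂ) ^ 2)) Filter.atTop (nhds 0) := by
    rw [tendsto_zero_iff_norm_tendsto_zero]
    have h1 := (rpow_mul_exp_neg_mul_sq_isLittleO_exp_neg hz 1).trans_tendsto (by
      have : Filter.Tendsto (fun x : ℝ => -((1/2) * x)) Filter.atTop Filter.atBot :=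
        Filter.tendsto_neg_atTop_atBot.comp (Filter.tendsto_id.const_mul_atTop (by norm_num))
      simpa [Function.comp_def] using Real.tendsto_exp_atBot.comp this)
    refine h1.congr' ?_
    filter_upwards [Filter.eventually_ge_atTop 0] with s hs
    rw [norm_mul, norm_cexp_neg_mul_sq, Complex.norm_real, Real.rpow_one, Real.norm_of_nonneg hs]
  have key := integral_Ioi_of_hasDerivAt_of_tendsto' hd (iG.sub (i2.const_mul (2 * z))) hlim
  rw [integral_sub iG (i2.const_mul (2 * z)), integral_const_mul, hG] at key
  have e : ∀ s ∈ Set.Ioi (0:ℝ), ((2 * s ^ ((2:ℝ) - 1)) • (((s ^ (2:ℝ) : ℝ) : ℂ) ^ ((3/2 : ℂ) - 1) * cexp (-(z * ((s ^ (2:ℝ) : ℝ) : ℂ))))) = 2 * ((s:ℂ) ^ 2 * cexp (-z * (s:ℂ) ^ 2)) := by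
    intro s hs
    have hs : 0 < s := hs
    rw [t_pow _ (by positivity), Real.rpow_two, Real.sqrt_sq hs.le, show (2:ℝ) - 1 = 1 by norm_num, Real.rpow_one, Complex.real_smul]
    push_cast
    ring_nf
  rw [setIntegral_congr_fun measurableSet_Ioi e, integral_const_mul]
  have hc : ((Real.pi : ℂ) / z) ^ (1/2 : ℂ) = z * (z ^ (-(3/2) : ℂ) * ((√Real.pi : ℝ) : ℂ)) := by
    have harg : z.arg ≠ Real.pi := by
      intro h
      rw [Complex.arg_eq_pi_iff] at h
      linarith [h.1]
    rw [Real.sqrt_eq_rpow, ofReal_cpow Real.pi_pos.le, ← mul_assoc]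
    nth_rewrite 2 [← Complex.cpow_one z]
    rw [← Complex.cpow_add _ _ hz0, cpow_def_of_ne_zero (div_ne_zero (by exact_mod_cast Real.pi_ne_zero) hz0),
      cpow_def_of_ne_zero hz0, cpow_def_of_ne_zero (by exact_mod_cast Real.pi_ne_zero), ← Complex.exp_add, div_eq_mul_inv,
      Complex.log_ofReal_mul Real.pi_pos (inv_ne_zero hz0), Complex.log_inv _ harg, Complex.ofReal_log Real.pi_pos.le]
    congr 1
    push_cast
    ring
  rw [hc] at key
  apply mul_left_cancel₀ hz0
  push_cast
  simp only [ofReal_zero, zero_mul, sub_zero] at key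
  linear_combination -key

theorem FF_outer (x y : ℝ) (p : ℝ × ℝ) :
    ∫ t in Set.Ioi (0:ℝ), FF x y p t =
      (cexp (-(I * (p.1 : ℂ) * (x : ℂ)) - I * (p.2 : ℂ) * (y : ℂ)) *
          ((((p.1 : ℂ) - I) ^ 2 + ((p.2 : ℂ) - I) ^ 2 + 3) ^ (-(3 / 2) : ℂ))) * ((√Real.pi / 2 : ℝ) : ℂ) := by
  unfold FF
  have hre : 0 < (((p.1 : ℂ) - I) ^ 2 + ((p.2 : ℂ) - I) ^ 2 + 3).re := by
    simp [pow_two]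
    nlinarith [mul_self_nonneg p.1, mul_self_nonneg p.2]
  rw [integral_const_mul, gamma_three_half _ hre, ← mul_assoc]

theorem pinned_inverse_fourier_transform (x y : ℝ) :
    (1 / (2 * (Real.pi : ℂ)) ^ 2) *
      ∫ p : ℝ × ℝ,
        Complex.exp (-(Complex.I * (p.1 : ℂ) * (x : ℂ)) - Complex.I * (p.2 : ℂ) * (y : ℂ)) *
          ((((p.1 : ℂ) - Complex.I) ^ 2 + ((p.2 : ℂ) - Complex.I) ^ 2 + 3) ^ (-(3 / 2) : ℂ)) =
    ((1 / (2 * Real.sqrt 3 * Real.pi) *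
        Real.exp (x + y - Real.sqrt 3 * Real.sqrt (x ^ 2 + y ^ 2)) : ℝ) : ℂ) := by
  have h := integral_integral_swap (FF_integrable x y)
  simp only [FF_outer] at h
  rw [integral_mul_const, setIntegral_congr_fun measurableSet_Ioi (fun t ht => FF_inner x y t ht),
    integral_complex_ofReal, integral_const_mul, bessel_half _ (Real.sqrt_nonneg _)] at h
  have hpi : ((√Real.pi : ℝ) : ℂ) ≠ 0 := by
    have : √Real.pi ≠ 0 := by positivity
    exact_mod_cast this
  have hpi2 : (Real.pi : ℂ) ≠ 0 := by exact_mod_cast Real.pi_ne_zero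
  have h3 : ((√3 : ℝ) : ℂ) ≠ 0 := by
    have : √(3:ℝ) ≠ 0 := by positivity
    exact_mod_cast this
  have h' := eq_div_of_mul_eq (by push_cast; exact div_ne_zero hpi two_ne_zero) h
  rw [h', sub_eq_add_neg (x + y), Real.exp_add (x + y), ← neg_mul]
  push_cast
  field_simp
  try ring
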